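/- Let σ be a split rule and VarGain(S,σ) = var(S) − (|S₀|/|S|)var(S₀) − (|S₁|/|S|)var(S₁) with (S₀,S₁) = σ(S), where all labels lie in [−2c, 2c]. Then |VarGain(S,σ) − VarGain(S',σ)| ≤ 36c²·ED*(S,S') for all nonempty finite multisets S, S'. -/

import Mathlib

/-- Edit distance (symmetric difference size) of two multisets. -/
def symmDist {α : Type*} [DecidableEq α] (S S' : Multiset α) : ℕ :=
  (S - S').card + (S' - S).card

/-- Relative edit distance `ED*(S,S') = △(S,S') / max(|S|,|S'|)`. -/
noncomputable def edStar {α : Type*} [DecidableEq α] (S S' : Multiset α) : ℝ :=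
  (symmDist S S' : ℝ) / ((max S.card S'.card : ℕ) : ℝ)

/-- Label variance `var(S) = (1/|S|²) Σ_{y,y'∈S}(y−y')²` of a multiset of examples
with labels `lab : α → ℝ` (sum over ordered pairs). -/
noncomputable def varOf {α : Type*} (lab : α → ℝ) (S : Multiset α) : ℝ :=
  ((S.map lab).bind fun y => (S.map lab).map fun y' => (y - y') ^ 2).sum /
    (S.card : ℝ) ^ 2

/-- Variance gain of a split rule `σ` on `S`. -/
noncomputable def varGain {α : Type*} (lab : α → ℝ) (σ : α → Bool)
    (S : Multiset α) : ℝ :=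
  varOf lab S
    - ((S.filter fun x => σ x = false).card : ℝ) / (S.card : ℝ) *
        varOf lab (S.filter fun x => σ x = false)
    - ((S.filter fun x => σ x = true).card : ℝ) / (S.card : ℝ) *
        varOf lab (S.filter fun x => σ x = true)

lemma titu9 {a b x y : ℝ} (hx : 0 ≤ x) (hy : 0 ≤ y) (ha : x = 0 → a = 0) (hb : y = 0 → b = 0) :
    (a + b) ^ 2 / (x + y) ≤ a ^ 2 / x + b ^ 2 / y := by
  rcases hx.eq_or_lt with h | h
  · subst h; simp [ha rfl]
  rcases hy.eq_or_lt with h' | h'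
  · subst h'; simp [hb rfl]
  rw [div_add_div _ _ h.ne' h'.ne', div_le_div_iff₀ (by positivity) (by positivity)]
  nlinarith [mul_nonneg (mul_nonneg h.le h'.le) (sq_nonneg (a * y - b * x)), sq_nonneg (a * y - b * x)]

/-- every bounded sum is a mean times the count -/
lemma mean9 {n s b : ℝ} (hb : 0 ≤ b) (hn : 0 ≤ n) (hs : |s| ≤ b * n) :
    ∃ m, |m| ≤ b ∧ s = n * m := by
  rcases hn.eq_or_lt with h | h
  · subst h
    refine ⟨0, by simpa using hb, ?_⟩
    have : |s| ≤ 0 := by simpa using hs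
    simpa using this
  · refine ⟨s / n, ?_, by field_simp⟩
    rw [abs_div, abs_of_pos h, div_le_iff₀ h]; exact hs

lemma qmean9 (n m : ℝ) : (n * m) ^ 2 / n = n * m ^ 2 := by
  rcases eq_or_ne n 0 with h | h
  · simp [h]
  · field_simp

noncomputable def phi9 (n0 n1 s0 s1 : ℝ) : ℝ :=
  s0 ^ 2 / n0 + s1 ^ 2 / n1 - (s0 + s1) ^ 2 / (n0 + n1)

lemma zero9 {n s b : ℝ} (hs : |s| ≤ b * n) : n = 0 → s = 0 := by
  rintro rfl
  have : |s| ≤ 0 := by simpa using hs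
  simpa using this

lemma phi9_nonneg {n0 n1 s0 s1 b : ℝ} (h0 : 0 ≤ n0) (h1 : 0 ≤ n1)
    (hs0 : |s0| ≤ b * n0) (hs1 : |s1| ≤ b * n1) : 0 ≤ phi9 n0 n1 s0 s1 := by
  have := titu9 h0 h1 (zero9 hs0) (zero9 hs1)
  unfold phi9; linarith

/-- upper bound -/
lemma upper9 {b n0 n1 s0 s1 x0 x1 z0 z1 : ℝ} (hb : 0 ≤ b) (h0 : 0 ≤ n0) (h1 : 0 ≤ n1)
    (hs0 : |s0| ≤ b * n0) (hs1 : |s1| ≤ b * n1) (hx0 : 0 ≤ x0) (hx1 : 0 ≤ x1)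
    (hz0 : |z0| ≤ b * x0) (hz1 : |z1| ≤ b * x1) :
    phi9 (n0 + x0) (n1 + x1) (s0 + z0) (s1 + z1) ≤
      phi9 n0 n1 s0 s1 + 9 / 2 * b ^ 2 * (x0 + x1) := by
  have t0 := titu9 h0 hx0 (zero9 hs0) (zero9 hz0)
  have t1 := titu9 h1 hx1 (zero9 hs1) (zero9 hz1)
  have q : ∀ {x z : ℝ}, 0 ≤ x → |z| ≤ b * x → z ^ 2 / x ≤ b ^ 2 * x := by
    intro x z hx hz
    obtain ⟨m, hm, rfl⟩ := mean9 hb hx hz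
    rw [qmean9]
    have := sq_le_sq' (abs_le.1 hm).1 (abs_le.1 hm).2
    nlinarith
  have q0 := q hx0 hz0
  have q1 := q hx1 hz1
  have hs : |s0 + s1| ≤ b * (n0 + n1) := (abs_add_le _ _).trans (by linarith)
  have hz : |z0 + z1| ≤ b * (x0 + x1) := (abs_add_le _ _).trans (by linarith)
  have hsz : |(s0 + s1) + (z0 + z1)| ≤ b * ((n0 + n1) + (x0 + x1)) :=
    (abs_add_le _ _).trans (by linarith)
  have key : (s0 + s1) ^ 2 / (n0 + n1) - 3 * b ^ 2 * (x0 + x1) ≤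
      (s0 + z0 + (s1 + z1)) ^ 2 / (n0 + x0 + (n1 + x1)) := by
    rw [show s0 + z0 + (s1 + z1) = (s0 + s1) + (z0 + z1) by ring,
      show n0 + x0 + (n1 + x1) = (n0 + n1) + (x0 + x1) by ring]
    have hn : 0 ≤ n0 + n1 := by linarith
    have hx : 0 ≤ x0 + x1 := by linarith
    generalize s0 + s1 = s at *
    generalize z0 + z1 = z at *
    generalize n0 + n1 = n at *
    generalize x0 + x1 = x at *
    obtain ⟨m, hm, rfl⟩ := mean9 hb hn hs
    obtain ⟨k, hk, hke⟩ := mean9 hb (add_nonneg hn hx) hsz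
    rw [hke, qmean9, qmean9]
    have hz' : z = (n + x) * k - n * m := by linarith
    have hm2 := abs_le.1 hm
    have hz2 := abs_le.1 hz
    have e1 : m ^ 2 ≤ b ^ 2 := sq_le_sq' hm2.1 hm2.2
    have e2 : -(b ^ 2 * x) ≤ m * z := by
      have : |m * z| ≤ b * (b * x) := by
        rw [abs_mul]; exact mul_le_mul hm hz (abs_nonneg _) hb
      have := (abs_le.1 this).1
      linarith
    have e3 : 0 ≤ (n + x) * (k - m) ^ 2 := by positivity
    have e4 : x * m ^ 2 ≤ x * b ^ 2 := by gcongr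
    subst hz'
    nlinarith
  unfold phi9
  have : 0 ≤ b ^ 2 * (x0 + x1) := by positivity
  linarith

lemma infin9 {b p q m0 m1 y : ℝ} (hp : 0 ≤ p) (hq : 0 ≤ q) (hpq : p + q = 1)
    (h0 : |m0| ≤ b) (h1 : |m1| ≤ b) (hy : |y| ≤ b) :
    p * q * (m0 - m1) ^ 2 - 9 / 2 * b ^ 2 ≤
      (q * (m0 - m1)) * (2 * y - 2 * m0 + q * (m0 - m1)) := by
  obtain rfl : p = 1 - q := by linarith
  have hw : |m0 - y| ≤ 2 * b := (abs_sub _ _).trans (by linarith)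
  have hd : |m0 - m1| ≤ 2 * b := (abs_sub _ _).trans (by linarith)
  have hmul : (m0 - m1) * (m0 - y) ≤ |m0 - m1| * (2 * b) :=
    (le_abs_self _).trans (by rw [abs_mul]; gcongr)
  have hsq : (m0 - m1) ^ 2 = |m0 - m1| ^ 2 := (sq_abs _).symm
  have ht := abs_nonneg (m0 - m1)
  have e1 : q * ((m0 - m1) * (m0 - y)) ≤ q * (|m0 - m1| * (2 * b)) := by gcongr
  have e2 : q * |m0 - m1| * |m0 - m1| ≤ q * |m0 - m1| * (2 * b) := by gcongr
  have e3 : (q * (m0 - m1)) ^ 2 = (q * |m0 - m1|) ^ 2 := by rw [mul_pow, mul_pow, hsq]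
  have e4 : q * (m0 - m1) ^ 2 = q * |m0 - m1| * |m0 - m1| := by rw [hsq]; ring
  nlinarith [sq_nonneg (2 * (q * |m0 - m1|) - 3 * b)]

lemma group9 {b n x d z H : ℝ} (hn : 0 ≤ n) (hx : 0 ≤ x) (hH : H ≤ 9 / 2 * b ^ 2)
    (hin : x * (H - 9 / 2 * b ^ 2) ≤ d * (2 * z - d * x)) :
    n * d ^ 2 + x * (H - 9 / 2 * b ^ 2) + z ^ 2 / (n + x) ≤ (n * d + z) ^ 2 / (n + x) := by
  rcases (add_nonneg hn hx).eq_or_lt with h | h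
  · have e1 : n = 0 := by linarith
    have e2 : x = 0 := by linarith
    subst e1 e2; simp
  · have e : (n * d + z) ^ 2 / (n + x) = (n * d * (n * d + 2 * z)) / (n + x) + z ^ 2 / (n + x) := by
      rw [← add_div]; congr 1; ring
    rw [e]
    gcongr
    rw [le_div_iff₀ h]
    have e1 := mul_le_mul_of_nonneg_left hin hn
    have e2 : x ^ 2 * (H - 9 / 2 * b ^ 2) ≤ 0 :=
      mul_nonpos_of_nonneg_of_nonpos (sq_nonneg _) (by linarith)
    nlinarith

lemma shift9 {N w : ℝ} (m : ℝ) (h : N = 0 → w = 0) :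
    (w + m * N) ^ 2 / N = w ^ 2 / N + 2 * m * w + m ^ 2 * N := by
  rcases eq_or_ne N 0 with h' | h'
  · simp [h', h h']
  · field_simp; ring

lemma lower9 {b n0 n1 s0 s1 x0 x1 z0 z1 : ℝ} (hb : 0 ≤ b) (h0 : 0 ≤ n0) (h1 : 0 ≤ n1)
    (hn : 0 < n0 + n1)
    (hs0 : |s0| ≤ b * n0) (hs1 : |s1| ≤ b * n1) (hx0 : 0 ≤ x0) (hx1 : 0 ≤ x1)
    (hz0 : |z0| ≤ b * x0) (hz1 : |z1| ≤ b * x1) :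
    phi9 n0 n1 s0 s1 + (x0 + x1) * (phi9 n0 n1 s0 s1 / (n0 + n1) - 9 / 2 * b ^ 2) ≤
      phi9 (n0 + x0) (n1 + x1) (s0 + z0) (s1 + z1) := by
  obtain ⟨m0, hm0, rfl⟩ := mean9 hb h0 hs0
  obtain ⟨m1, hm1, rfl⟩ := mean9 hb h1 hs1
  obtain ⟨y0, hy0, rfl⟩ := mean9 hb hx0 hz0
  obtain ⟨y1, hy1, rfl⟩ := mean9 hb hx1 hz1
  obtain ⟨n, hnn⟩ : ∃ n, n = n0 + n1 := ⟨_, rfl⟩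
  have hnp : 0 < n := by linarith
  obtain ⟨p, hp⟩ : ∃ p, p = n0 / n := ⟨_, rfl⟩
  obtain ⟨q, hq⟩ : ∃ q, q = n1 / n := ⟨_, rfl⟩
  have hp0 : 0 ≤ p := by rw [hp]; positivity
  have hq0 : 0 ≤ q := by rw [hq]; positivity
  have hpq : p + q = 1 := by rw [hp, hq, ← add_div, ← hnn, div_self hnp.ne']
  have en0 : n0 = n * p := by rw [hp]; field_simp
  have en1 : n1 = n * q := by rw [hq]; field_simp
  obtain ⟨H, hH⟩ : ∃ H, H = p * q * (m0 - m1) ^ 2 := ⟨_, rfl⟩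
  obtain ⟨m, hm⟩ : ∃ m, m = p * m0 + q * m1 := ⟨_, rfl⟩
  have i0 := infin9 hp0 hq0 hpq hm0 hm1 hy0
  have i1 := infin9 hq0 hp0 (by linarith) hm1 hm0 hy1
  have hHle : H ≤ 9 / 2 * b ^ 2 := by
    have hd : |m0 - m1| ≤ 2 * b := (abs_sub _ _).trans (by linarith)
    have e1 : (m0 - m1) ^ 2 ≤ (2 * b) ^ 2 := sq_le_sq' (abs_le.1 hd).1 (abs_le.1 hd).2
    have e2 : p * q ≤ 1 := by nlinarith
    have : p * q * (m0 - m1) ^ 2 ≤ 1 * (2 * b) ^ 2 := by gcongr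
    nlinarith [sq_nonneg b]
  have ephi : phi9 n0 n1 (n0 * m0) (n1 * m1) = n * H := by
    unfold phi9
    rw [qmean9, qmean9, ← hnn, show n0 * m0 + n1 * m1 = n * m by rw [en0, en1, hm]; ring, qmean9,
      en0, en1, hH, hm]
    obtain rfl : p = 1 - q := by linarith
    ring
  have g0 := group9 (b := b) (n := n0) (x := x0) (d := q * (m0 - m1)) (z := x0 * y0 - m * x0)
    (H := H) h0 hx0 hHle (by
      have := mul_le_mul_of_nonneg_left i0 hx0
      rw [hH]
      refine this.trans (le_of_eq ?_)
      rw [hm]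
      obtain rfl : p = 1 - q := by linarith
      ring)
  have g1 := group9 (b := b) (n := n1) (x := x1) (d := p * (m1 - m0)) (z := x1 * y1 - m * x1)
    (H := H) h1 hx1 hHle (by
      have := mul_le_mul_of_nonneg_left i1 hx1
      rw [hH, show p * q * (m0 - m1) ^ 2 = q * p * (m1 - m0) ^ 2 by ring]
      refine this.trans (le_of_eq ?_)
      rw [hm]
      obtain rfl : p = 1 - q := by linarith
      ring)
  have hzero : ∀ {u v : ℝ}, 0 ≤ u → 0 ≤ v → u + v = 0 → u = 0 ∧ v = 0 := by
    intro u v hu hv huv; constructor <;> linarith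
  have k0 := shift9 (N := n0 + x0) (w := n0 * (q * (m0 - m1)) + (x0 * y0 - m * x0)) m (by
    intro h; obtain ⟨e1, e2⟩ := hzero h0 hx0 h; simp [e1, e2])
  have k1 := shift9 (N := n1 + x1) (w := n1 * (p * (m1 - m0)) + (x1 * y1 - m * x1)) m (by
    intro h; obtain ⟨e1, e2⟩ := hzero h1 hx1 h; simp [e1, e2])
  have k := shift9 (N := (n0 + x0) + (n1 + x1))
    (w := (x0 * y0 - m * x0) + (x1 * y1 - m * x1)) m (by intro h; linarith)
  have t := titu9 (a := x0 * y0 - m * x0) (b := x1 * y1 - m * x1)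
    (add_nonneg h0 hx0) (add_nonneg h1 hx1)
    (by intro h; obtain ⟨e1, e2⟩ := hzero h0 hx0 h; simp [e2])
    (by intro h; obtain ⟨e1, e2⟩ := hzero h1 hx1 h; simp [e2])
  have d0 : m0 - m = q * (m0 - m1) := by
    rw [hm]; obtain rfl : p = 1 - q := by linarith
    ring
  have d1 : m1 - m = p * (m1 - m0) := by
    rw [hm]; obtain rfl : q = 1 - p := by linarith
    ring
  have cen : n0 * (q * (m0 - m1)) + n1 * (p * (m1 - m0)) = 0 := by rw [en0, en1]; ring
  have eH : n0 * (q * (m0 - m1)) ^ 2 + n1 * (p * (m1 - m0)) ^ 2 = n * H := by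
    rw [en0, en1, hH]
    obtain rfl : p = 1 - q := by linarith
    ring
  have f0 : n0 * (q * (m0 - m1)) + (x0 * y0 - m * x0) + m * (n0 + x0) = n0 * m0 + x0 * y0 := by
    rw [← d0]; ring
  have f1 : n1 * (p * (m1 - m0)) + (x1 * y1 - m * x1) + m * (n1 + x1) = n1 * m1 + x1 * y1 := by
    rw [← d1]; ring
  have f : (x0 * y0 - m * x0) + (x1 * y1 - m * x1) + m * ((n0 + x0) + (n1 + x1)) =
      n0 * m0 + x0 * y0 + (n1 * m1 + x1 * y1) := by
    rw [← f0, ← f1]; linarith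
  rw [f0] at k0
  rw [f1] at k1
  rw [f] at k
  rw [ephi, ← hnn, mul_div_cancel_left₀ _ hnp.ne']
  unfold phi9
  rw [k0, k1, k]
  have cen2 : 2 * m * (n0 * (q * (m0 - m1)) + (x0 * y0 - m * x0)) +
      2 * m * (n1 * (p * (m1 - m0)) + (x1 * y1 - m * x1)) =
      2 * m * (x0 * y0 - m * x0 + (x1 * y1 - m * x1)) := by
    linear_combination 2 * m * cen
  linarith

lemma pairsum9 (T : Multiset ℝ) :
    (T.bind fun y => T.map fun y' => (y - y') ^ 2).sum =
      2 * ((T.card : ℝ) * (T.map fun y => y ^ 2).sum - T.sum ^ 2) := by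
  have inner : ∀ (y : ℝ) (U : Multiset ℝ), (U.map fun y' => (y - y') ^ 2).sum =
      (U.card : ℝ) * y ^ 2 - 2 * y * U.sum + (U.map fun y => y ^ 2).sum := by
    intro y U
    induction U using Multiset.induction_on with
    | empty => simp
    | cons a U ih => simp [ih]; ring
  have outer : ∀ (k t r : ℝ) (U : Multiset ℝ),
      (U.map fun y => k * y ^ 2 - 2 * y * t + r).sum =
      k * (U.map fun y => y ^ 2).sum - 2 * U.sum * t + (U.card : ℝ) * r := by
    intro k t r U
    induction U using Multiset.induction_on with
    | empty => simp
    | cons a U ih => simp [ih]; ring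
  rw [Multiset.sum_bind]
  simp only [inner]
  rw [outer]; ring

noncomputable def cnt9 {α : Type*} (σ : α → Bool) (j : Bool) (S : Multiset α) : ℝ :=
  ((S.filter fun x => σ x = j).card : ℝ)

noncomputable def sm9 {α : Type*} (lab : α → ℝ) (σ : α → Bool) (j : Bool) (S : Multiset α) : ℝ :=
  ((S.filter fun x => σ x = j).map lab).sum

noncomputable def Phi9 {α : Type*} (lab : α → ℝ) (σ : α → Bool) (S : Multiset α) : ℝ :=
  phi9 (cnt9 σ false S) (cnt9 σ true S) (sm9 lab σ false S) (sm9 lab σ true S)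

lemma split9 {α : Type*} (σ : α → Bool) (S : Multiset α) :
    (S.filter fun x => σ x = false) + (S.filter fun x => σ x = true) = S := by
  have := Multiset.filter_add_not (fun x => σ x = false) S
  simpa using this

lemma cntsum9 {α : Type*} (σ : α → Bool) (S : Multiset α) :
    cnt9 σ false S + cnt9 σ true S = (S.card : ℝ) := by
  unfold cnt9
  rw [← Nat.cast_add, ← Multiset.card_add, split9]

lemma varOf9 {α : Type*} (lab : α → ℝ) (S : Multiset α) :
    (S.card : ℝ) * varOf lab S =
      2 * ((S.map fun x => lab x ^ 2).sum - (S.map lab).sum ^ 2 / (S.card : ℝ)) := by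
  unfold varOf
  rw [pairsum9]
  rcases eq_or_ne S 0 with h | h
  · simp [h]
  · have : (S.card : ℝ) ≠ 0 := by simpa using h
    simp only [Multiset.card_map, Multiset.map_map, Function.comp_def]
    field_simp

lemma gain9 {α : Type*} (lab : α → ℝ) (σ : α → Bool) (S : Multiset α) (hS : S ≠ 0) :
    varGain lab σ S = 2 * Phi9 lab σ S / (S.card : ℝ) := by
  have hc : (S.card : ℝ) ≠ 0 := by simpa using hS
  rw [eq_div_iff hc]
  have v := varOf9 lab S
  have v0 := varOf9 lab (S.filter fun x => σ x = false)
  have v1 := varOf9 lab (S.filter fun x => σ x = true)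
  have e : varGain lab σ S * (S.card : ℝ) = (S.card : ℝ) * varOf lab S
    - ((S.filter fun x => σ x = false).card : ℝ) * varOf lab (S.filter fun x => σ x = false)
    - ((S.filter fun x => σ x = true).card : ℝ) * varOf lab (S.filter fun x => σ x = true) := by
    unfold varGain; field_simp
  rw [e, v, v0, v1]
  have a1 : (S.map lab).sum = sm9 lab σ false S + sm9 lab σ true S := by
    unfold sm9
    rw [← Multiset.sum_add, ← Multiset.map_add, split9]
  have a2 : (S.map fun x => lab x ^ 2).sum =
      ((S.filter fun x => σ x = false).map fun x => lab x ^ 2).sum +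
      ((S.filter fun x => σ x = true).map fun x => lab x ^ 2).sum := by
    rw [← Multiset.sum_add, ← Multiset.map_add, split9]
  rw [a2, a1, ← cntsum9 σ S]
  unfold Phi9 phi9 cnt9 sm9
  ring

lemma smbound9 {α : Type*} (lab : α → ℝ) (b : ℝ) (hb : ∀ a, |lab a| ≤ b) (S : Multiset α) :
    |(S.map lab).sum| ≤ b * (S.card : ℝ) := by
  induction S using Multiset.induction_on with
  | empty => simp
  | cons a U ih =>
    simp only [Multiset.map_cons, Multiset.sum_cons, Multiset.card_cons, Nat.cast_add, Nat.cast_one]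
    have := abs_add_le (lab a) (U.map lab).sum
    have := hb a
    linarith

lemma Phi9_add {α : Type*} (lab : α → ℝ) (σ : α → Bool) (S X : Multiset α) :
    Phi9 lab σ (S + X) = phi9 (cnt9 σ false S + cnt9 σ false X) (cnt9 σ true S + cnt9 σ true X)
      (sm9 lab σ false S + sm9 lab σ false X) (sm9 lab σ true S + sm9 lab σ true X) := by
  simp [Phi9, cnt9, sm9]

lemma Upper9 {α : Type*} (lab : α → ℝ) (σ : α → Bool) (b : ℝ) (hb0 : 0 ≤ b)
    (hb : ∀ a, |lab a| ≤ b) (S X : Multiset α) :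
    Phi9 lab σ (S + X) ≤ Phi9 lab σ S + 9 / 2 * b ^ 2 * (X.card : ℝ) := by
  rw [Phi9_add, ← cntsum9 σ X]
  exact upper9 hb0 (Nat.cast_nonneg _) (Nat.cast_nonneg _) (smbound9 lab b hb _)
    (smbound9 lab b hb _) (Nat.cast_nonneg _) (Nat.cast_nonneg _) (smbound9 lab b hb _)
    (smbound9 lab b hb _)

lemma Nonneg9 {α : Type*} (lab : α → ℝ) (σ : α → Bool) (b : ℝ)
    (hb : ∀ a, |lab a| ≤ b) (S : Multiset α) : 0 ≤ Phi9 lab σ S :=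
  phi9_nonneg (Nat.cast_nonneg _) (Nat.cast_nonneg _) (smbound9 lab b hb _)
    (smbound9 lab b hb _)

lemma Lower9 {α : Type*} (lab : α → ℝ) (σ : α → Bool) (b : ℝ) (hb0 : 0 ≤ b)
    (hb : ∀ a, |lab a| ≤ b) (S X : Multiset α) :
    Phi9 lab σ S + (X.card : ℝ) * (Phi9 lab σ S / (S.card : ℝ) - 9 / 2 * b ^ 2) ≤
      Phi9 lab σ (S + X) := by
  rcases eq_or_ne S 0 with h | h
  · subst h
    have h0 : Phi9 lab σ 0 = 0 := by simp [Phi9, phi9, sm9]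
    have := Nonneg9 lab σ b hb (0 + X)
    have h2 : 0 ≤ (X.card : ℝ) * (9 / 2 * b ^ 2) := by positivity
    rw [h0, zero_div]
    linarith
  · have hc : 0 < (S.card : ℝ) := by
      exact_mod_cast Multiset.card_pos.2 h
    rw [← cntsum9 σ S] at hc ⊢
    rw [Phi9_add, ← cntsum9 σ X]
    exact lower9 hb0 (Nat.cast_nonneg _) (Nat.cast_nonneg _) hc (smbound9 lab b hb _)
      (smbound9 lab b hb _) (Nat.cast_nonneg _) (Nat.cast_nonneg _) (smbound9 lab b hb _)
      (smbound9 lab b hb _)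

/-- the case where the second multiset is the larger one -/
lemma main9 {α : Type*} (lab : α → ℝ) (σ : α → Bool) (b : ℝ) (hb0 : 0 ≤ b)
    (hb : ∀ a, |lab a| ≤ b) (A X Y : Multiset α) (hS : A + Y ≠ 0)
    (hle : (A + Y).card ≤ (A + X).card) :
    |varGain lab σ (A + Y) - varGain lab σ (A + X)| ≤
      9 * b ^ 2 * (((Y.card : ℝ) + (X.card : ℝ)) / ((A + X).card : ℝ)) := by
  have hMpos : 0 < (A + Y).card := Multiset.card_pos.2 hS
  have hS' : A + X ≠ 0 := Multiset.card_pos.1 (hMpos.trans_le hle)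
  have hM : 0 < ((A + Y).card : ℝ) := by exact_mod_cast hMpos
  have hN : 0 < ((A + X).card : ℝ) := by exact_mod_cast (hMpos.trans_le hle)
  rw [gain9 lab σ _ hS, gain9 lab σ _ hS']
  have u1 := Upper9 lab σ b hb0 hb A X
  have l1 := Lower9 lab σ b hb0 hb A Y
  have l2 := Lower9 lab σ b hb0 hb (A + Y) X
  have u2 := Upper9 lab σ b hb0 hb (A + X) Y
  rw [add_right_comm A X Y] at u2
  have hA : 0 ≤ (Y.card : ℝ) * (Phi9 lab σ A / (A.card : ℝ)) := by
    have := Nonneg9 lab σ b hb A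
    positivity
  obtain ⟨H, hH⟩ : ∃ H, H = Phi9 lab σ (A + Y) / ((A + Y).card : ℝ) := ⟨_, rfl⟩
  have hH0 : 0 ≤ H := by
    have := Nonneg9 lab σ b hb (A + Y)
    rw [hH]; positivity
  have eP : Phi9 lab σ (A + Y) = H * ((A + Y).card : ℝ) := by rw [hH]; field_simp
  rw [← hH] at l2
  have cM : ((A + Y).card : ℝ) = (A.card : ℝ) + (Y.card : ℝ) := by simp
  have cN : ((A + X).card : ℝ) = (A.card : ℝ) + (X.card : ℝ) := by simp
  have hxy : (Y.card : ℝ) ≤ (X.card : ℝ) := by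
    have : ((A + Y).card : ℝ) ≤ ((A + X).card : ℝ) := by exact_mod_cast hle
    linarith
  have e : 2 * Phi9 lab σ (A + Y) / ((A + Y).card : ℝ) - 2 * Phi9 lab σ (A + X) / ((A + X).card : ℝ)
      = (2 * (H * ((A + X).card : ℝ)) - 2 * Phi9 lab σ (A + X)) / ((A + X).card : ℝ) := by
    rw [hH]; field_simp
  rw [e, abs_div, abs_of_pos hN, ← mul_div_assoc]
  gcongr
  have hYH : 0 ≤ (Y.card : ℝ) * H := by positivity
  have hXH : 0 ≤ ((X.card : ℝ) - (Y.card : ℝ)) * H := mul_nonneg (by linarith) hH0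
  rw [abs_le]
  rw [cN]
  rw [cM] at eP
  constructor
  · nlinarith
  · nlinarith

theorem stmt9 {α : Type*} [DecidableEq α] (lab : α → ℝ) (σ : α → Bool) (c : ℝ)
    (hb : ∀ a : α, |lab a| ≤ 2 * c)
    (S S' : Multiset α) (hS : S ≠ 0) (hS' : S' ≠ 0) :
    |varGain lab σ S - varGain lab σ S'| ≤ 36 * c ^ 2 * edStar S S' := by
  have hb0 : 0 ≤ 2 * c := by
    obtain ⟨a, _⟩ := Multiset.exists_mem_of_ne_zero hS
    exact (abs_nonneg _).trans (hb a)
  have e1 : S ∩ S' + (S - S') = S := by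
    rw [add_comm]; exact Multiset.sub_add_inter S S'
  have e2 : S ∩ S' + (S' - S) = S' := by
    rw [add_comm, Multiset.inter_comm]; exact Multiset.sub_add_inter S' S
  unfold edStar symmDist
  rcases le_total S.card S'.card with h | h
  · have := main9 lab σ (2 * c) hb0 hb (S ∩ S') (S' - S) (S - S') (by rwa [e1])
      (by rwa [e1, e2])
    rw [e1, e2] at this
    rw [max_eq_right h, Nat.cast_add]
    refine this.trans (le_of_eq (by ring))
  · have := main9 lab σ (2 * c) hb0 hb (S ∩ S') (S - S') (S' - S) (by rwa [e2])
      (by rwa [e1, e2])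
    rw [e1, e2] at this
    rw [max_eq_left h, Nat.cast_add, abs_sub_comm]
    refine this.trans (le_of_eq (by ring))
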